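/- Let P be an isolated singular point of a one-dimensional foliation of ℙ², with Milnor number μ_P and multiplicity e_P. Since the singular locus is locally cut out by two equations whose ideal is contained in the e_P-th power of the maximal ideal, μ_P ≥ (e_P² + 3e_P − 2)/2. In commutative-algebra terms: if R is the local ring of ℙ² at P (a 2-dimensional regular local ring with maximal ideal 𝔪) and I = (f,g) ⊂ 𝔪^e is an 𝔪-primary ideal generated by two elements, then length(R/I) ≥ (e² + 3e − 2)/2 = binom(e+1,2) + e − 1. -/

import Mathlib

/-!
For every ideal `I` and element `x`, the exact sequence `0 → R/(I : x) → R/I → R/(I + (x)) → 0`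
gives `ℓ(R/I) = ℓ(R/(I : x)) + ℓ(R/(I + (x)))`.

If `x, y` is a regular sequence, then `((x, y)^(n+1) : x) = (x, y)^n`, so that `ℓ(R/(x, y)^n)`
grows by `ℓ(R/(x, y^(n+1))) = (n + 1) ℓ(R/(x, y))` from `n` to `n + 1`. Two generators `x, y` of
the maximal ideal `𝔪` of a two-dimensional local ring form a regular sequence: the ring is a domain,
because a prime `p` with `dim R/p ≥ 2` lies in `(x)`, whence `p = x p` and `p = 0` by Nakayama.
Hence `ℓ(R/𝔪^n) = binom(n+1, 2)`.

If `f ∈ 𝔪^e` and `𝔪^(e+1) ⊆ I`, then `(I : f)` contains `𝔪`, so adding `f` to `I` lowers the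
colength by at most one. Adding `f` and `g` to `𝔪^(e+1)` thus leaves
`ℓ(R/(f, g)) ≥ binom(e+2, 2) - 2`.
-/

open IsLocalRing RingTheory.Sequence
open scoped Pointwise

section Length

variable {R : Type*} [CommRing R]

lemma length_quotient_le_of_le {I J : Ideal R} (h : I ≤ J) :
    Module.length R (R ⧸ J) ≤ Module.length R (R ⧸ I) :=
  Module.length_le_of_surjective (Submodule.factor h) (Submodule.factor_surjective h)

lemma length_quotient_eq_colon_add_sup (I : Ideal R) (x : R) :
    Module.length R (R ⧸ I) =
      Module.length R (R ⧸ I.colon {x}) + Module.length R (R ⧸ I ⊔ Ideal.span {x}) := by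
  let N : Submodule R (R ⧸ I) := Submodule.span R {I.mkQ x}
  have hcolon : Ideal.torsionOf R (R ⧸ I) (I.mkQ x) = I.colon {x} := by
    ext r
    rw [Ideal.mem_torsionOf_iff, ← map_smul, Submodule.mkQ_apply, Submodule.Quotient.mk_eq_zero,
      Submodule.mem_colon_singleton]
  have hmap : Submodule.map I.mkQ (Ideal.span {x}) = N := by
    rw [← Ideal.submodule_span_eq, Submodule.map_span, Set.image_singleton]
  rw [Module.length_eq_add_of_exact N.subtype N.mkQ N.subtype_injective N.mkQ_surjective
    (LinearMap.exact_subtype_mkQ N)]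
  congr 1
  · exact ((Ideal.quotTorsionOfEquivSpanSingleton R _ (I.mkQ x)).symm.trans
      (Submodule.quotEquivOfEq _ _ hcolon)).length_eq
  · exact ((Submodule.quotEquivOfEq _ _ hmap.symm).trans
      (Submodule.quotientQuotientEquivQuotientSup I (Ideal.span {x}))).length_eq

lemma length_quotient_le_card_mul_add {I J : Ideal R} {s : Finset R} (h : Ideal.span s * J ≤ I) :
    Module.length R (R ⧸ I) ≤
      s.card * Module.length R (R ⧸ J) + Module.length R (R ⧸ I ⊔ Ideal.span s) := by
  classical
  induction s using Finset.induction_on with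
  | empty =>
    rw [Finset.coe_empty, Ideal.span_empty, sup_bot_eq]
    exact le_add_self
  | insert x s hx ih =>
    rw [Finset.coe_insert, Ideal.span_insert, Ideal.sup_mul, sup_le_iff] at h
    have hJ : J ≤ (I ⊔ Ideal.span s).colon {x} := fun r hr =>
      Submodule.mem_colon_singleton.2 <| Ideal.mem_sup_left <| h.1 <| by
        simpa only [smul_eq_mul, mul_comm] using
          Ideal.mul_mem_mul (Ideal.mem_span_singleton_self x) hr
    calc Module.length R (R ⧸ I)
        ≤ s.card * Module.length R (R ⧸ J) + Module.length R (R ⧸ I ⊔ Ideal.span s) := ih h.2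
      _ = s.card * Module.length R (R ⧸ J) + (Module.length R (R ⧸ (I ⊔ Ideal.span s).colon {x}) +
            Module.length R (R ⧸ I ⊔ Ideal.span s ⊔ Ideal.span {x})) := by
          rw [← length_quotient_eq_colon_add_sup]
      _ ≤ s.card * Module.length R (R ⧸ J) + (Module.length R (R ⧸ J) +
            Module.length R (R ⧸ I ⊔ Ideal.span s ⊔ Ideal.span {x})) := by
          gcongr
          exact length_quotient_le_of_le hJ
      _ = _ := by
          rw [Finset.card_insert_of_notMem hx, Finset.coe_insert, Ideal.span_insert,
            sup_comm (Ideal.span {x}), sup_assoc, Nat.cast_succ, add_mul, one_mul, add_assoc]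

lemma length_quotient_sup_span_pow {I : Ideal R} {y : R} (hy : IsSMulRegular (R ⧸ I) y) (n : ℕ) :
    Module.length R (R ⧸ I ⊔ Ideal.span {y ^ n}) =
      n * Module.length R (R ⧸ I ⊔ Ideal.span {y}) := by
  induction n with
  | zero => simp [Submodule.Quotient.subsingleton_iff]
  | succ n ih =>
    have hcolon : (I ⊔ Ideal.span {y ^ (n + 1)}).colon {y} = I ⊔ Ideal.span {y ^ n} := by
      ext a
      rw [Submodule.mem_colon_singleton, smul_eq_mul, sup_comm, sup_comm I,
        Ideal.mem_span_singleton_sup, Ideal.mem_span_singleton_sup]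
      constructor
      · rintro ⟨c, i, hi, h⟩
        refine ⟨c, a - c * y ^ n, mem_of_isSMulRegular_quotient_of_smul_mem hy ?_, by ring⟩
        rwa [smul_eq_mul, show y * (a - c * y ^ n) = i by linear_combination -h]
      · rintro ⟨c, i, hi, rfl⟩
        exact ⟨c, i * y, I.mul_mem_right y hi, by ring⟩
    have hsup : I ⊔ Ideal.span {y ^ (n + 1)} ⊔ Ideal.span {y} = I ⊔ Ideal.span {y} := by
      rw [sup_assoc, sup_eq_right.2 (Ideal.span_singleton_le_span_singleton.2
        (dvd_pow_self y n.succ_ne_zero))]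
    rw [length_quotient_eq_colon_add_sup _ y, hcolon, hsup, ih, Nat.cast_succ, add_mul, one_mul]

lemma sup_pow_succ (I J : Ideal R) (n : ℕ) :
    (I ⊔ J) ^ (n + 1) = I * (I ⊔ J) ^ n ⊔ J ^ (n + 1) := by
  induction n with
  | zero => simp
  | succ n ih =>
    have hJ : I * J ^ (n + 1) ≤ I * (I ⊔ J) ^ (n + 1) :=
      Ideal.mul_mono_right (Ideal.pow_right_mono le_sup_right _)
    calc (I ⊔ J) ^ (n + 1 + 1)
        = (I ⊔ J) * (I * (I ⊔ J) ^ n ⊔ J ^ (n + 1)) := by rw [pow_succ', ih]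
      _ = I * (I ⊔ J) ^ (n + 1) ⊔ (I * J ^ (n + 1) ⊔ J ^ (n + 1 + 1)) := by
          rw [Ideal.mul_sup, mul_left_comm, ← pow_succ', Ideal.sup_mul, ← pow_succ']
      _ = I * (I ⊔ J) ^ (n + 1) ⊔ J ^ (n + 1 + 1) := by rw [← sup_assoc, sup_eq_left.2 hJ]

lemma isWeaklyRegular_pair_iff {x y : R} :
    IsWeaklyRegular R [x, y] ↔ IsSMulRegular R x ∧ IsSMulRegular (R ⧸ Ideal.span {x}) y := by
  have h : x • (⊤ : Ideal R) = Ideal.span {x} := by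
    rw [← Submodule.ideal_span_singleton_smul, smul_eq_mul, Ideal.mul_top]
  rw [isWeaklyRegular_cons_iff, isWeaklyRegular_singleton_iff]
  exact and_congr_right' ((Submodule.quotEquivOfEq _ _ h).isSMulRegular_congr y)

lemma colon_span_pair_pow_succ {x y : R} (h : IsWeaklyRegular R [x, y]) (n : ℕ) :
    (Ideal.span {x, y} ^ (n + 1)).colon {x} = Ideal.span {x, y} ^ n := by
  obtain ⟨hx, hy⟩ := isWeaklyRegular_pair_iff.1 h
  refine le_antisymm (fun a ha => ?_) fun a ha => Submodule.mem_colon_singleton.2 ?_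
  · rw [Submodule.mem_colon_singleton, smul_eq_mul, Ideal.span_insert, sup_pow_succ, sup_comm,
      Ideal.span_singleton_pow, Ideal.mem_span_singleton_sup, ← Ideal.span_insert] at ha
    obtain ⟨c, _, hi, hac⟩ := ha
    obtain ⟨b, hb, rfl⟩ := Ideal.mem_span_singleton_mul.1 hi
    obtain ⟨d, rfl⟩ : x ∣ c := by
      refine Ideal.mem_span_singleton.1 <|
        mem_of_isSMulRegular_quotient_of_smul_mem (hy.pow (n + 1)) ?_
      exact Ideal.mem_span_singleton.2 ⟨a - b, by rw [smul_eq_mul]; linear_combination hac⟩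
    have hab : a = b + d * y ^ (n + 1) := hx (by simp only [smul_eq_mul]; linear_combination -hac)
    have hyn : y ^ (n + 1) ∈ Ideal.span {x, y} ^ n :=
      Ideal.pow_le_pow_right n.le_succ (Ideal.pow_mem_pow (Ideal.subset_span (by simp)) _)
    exact hab ▸ add_mem hb (Ideal.mul_mem_left _ d hyn)
  · rw [pow_succ, smul_eq_mul]
    exact Ideal.mul_mem_mul ha (Ideal.subset_span (Set.mem_insert x {y}))

theorem length_quotient_span_pair_pow {x y : R} (h : IsWeaklyRegular R [x, y]) (n : ℕ) :
    Module.length R (R ⧸ Ideal.span {x, y} ^ n) =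
      (n + 1).choose 2 * Module.length R (R ⧸ Ideal.span {x, y}) := by
  induction n with
  | zero => simp [Submodule.Quotient.subsingleton_iff]
  | succ n ih =>
    have hsup : Ideal.span {x, y} ^ (n + 1) ⊔ Ideal.span {x} =
        Ideal.span {x} ⊔ Ideal.span {y ^ (n + 1)} := by
      rw [Ideal.span_insert, sup_pow_succ, Ideal.span_singleton_pow, sup_right_comm,
        sup_eq_right.2 (Ideal.mul_le_left (I := Ideal.span {x}))]
    rw [length_quotient_eq_colon_add_sup _ x, colon_span_pair_pow_succ h, hsup, ih,
      length_quotient_sup_span_pow (isWeaklyRegular_pair_iff.1 h).2, ← Ideal.span_insert,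
      ← add_mul, ← Nat.cast_add, Nat.choose_succ_succ' (n + 1) 1, Nat.choose_one_right, add_comm]

end Length

section LocalRing

variable {R : Type*} [CommRing R] [IsLocalRing R]

lemma length_quotient_maximalIdeal : Module.length R (R ⧸ maximalIdeal R) = 1 :=
  Module.length_eq_one_iff.2 (isSimpleModule_iff_isCoatom.2 (maximalIdeal.isMaximal R).out)

lemma length_quotient_maximalIdeal_pow_succ_le {e : ℕ} {s : Finset R}
    (hs : Ideal.span s ≤ maximalIdeal R ^ e) :
    Module.length R (R ⧸ maximalIdeal R ^ (e + 1)) ≤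
      s.card + Module.length R (R ⧸ Ideal.span (s : Set R)) := by
  have h := length_quotient_le_card_mul_add (I := maximalIdeal R ^ (e + 1)) (J := maximalIdeal R)
    (s := s) (by rw [pow_succ]; exact Ideal.mul_mono_left hs)
  rw [length_quotient_maximalIdeal, mul_one] at h
  grw [h, length_quotient_le_of_le (le_sup_right : Ideal.span (s : Set R) ≤ _)]

end LocalRing

lemma exists_isPrime_le_ringKrullDim_quotient {R : Type*} [CommRing R] {n : ℕ}
    (h : n ≤ ringKrullDim R) : ∃ p : Ideal R, p.IsPrime ∧ n ≤ ringKrullDim (R ⧸ p) := by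
  obtain ⟨l, hl⟩ := Order.le_krullDim_iff.1 h
  refine ⟨l.head.asIdeal, l.head.2, ?_⟩
  rw [ringKrullDim_quotient]
  exact Order.le_krullDim_iff.2 ⟨.mk l.length (fun i => ⟨l i, l.head_le i⟩) l.strictMono, hl⟩

section NoetherianLocalRing

variable {R : Type*} [CommRing R] [IsNoetherianRing R] [IsLocalRing R]

lemma not_maximalIdeal_le_radical_sup_span_singleton {I : Ideal R} {z : R}
    (hI : 2 ≤ ringKrullDim (R ⧸ I)) (hz : z ∈ maximalIdeal R) :
    ¬ maximalIdeal R ≤ (I ⊔ Ideal.span {z}).radical := by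
  intro hle
  rw [ringKrullDim_quotient] at hI
  obtain ⟨l, hl⟩ := (Order.le_krullDim_iff (n := 2)).1 hI
  let p := l ⟨0, by omega⟩
  let q := l ⟨1, by omega⟩
  have hpq : p.1.asIdeal < q.1.asIdeal := l.strictMono Nat.zero_lt_one
  have hqm : q.1.asIdeal < maximalIdeal R :=
    ((PrimeSpectrum.asIdeal_lt_asIdeal _ _).2 (l.strictMono (b := ⟨2, by omega⟩)
      Nat.one_lt_two)).trans_le (le_maximalIdeal (l _).1.2.ne_top)
  have hmin : maximalIdeal R ∈ (Ideal.span (insert z (p.1.asIdeal : Set R))).minimalPrimes := by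
    rw [Ideal.span_insert, Ideal.span_eq, sup_comm]
    refine ⟨⟨inferInstance, sup_le (le_maximalIdeal p.1.2.ne_top)
      ((Ideal.span_singleton_le_iff_mem _).2 hz)⟩, fun r hr _ => hle.trans ?_⟩
    exact hr.1.radical_le_iff.2 ((sup_le_sup_right p.2 _).trans hr.2)
  have hqmin := Ideal.mem_minimalPrimes_span_of_mem_minimalPrimes_span_insert hqm z _ hmin
    p.1.asIdeal hpq.le ((Set.subset_insert z _).trans (Ideal.subset_span.trans Ideal.le_radical))
  rw [Ideal.span_eq, Ideal.minimalPrimes_eq_subsingleton_self, Set.mem_singleton_iff] at hqmin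
  exact hpq.ne' hqmin

lemma finiteMultiplicity_of_not_isUnit {a b : R} (ha : ¬ IsUnit a) (hb : b ≠ 0) :
    FiniteMultiplicity a b := by
  rw [FiniteMultiplicity.def]
  by_contra! h
  have hmem : b ∈ ⨅ n, Ideal.span {a} ^ n := by
    refine Ideal.mem_iInf.2 fun n => ?_
    rw [Ideal.span_singleton_pow, Ideal.mem_span_singleton]
    exact (pow_dvd_pow a n.le_succ).trans (h n)
  rw [Ideal.iInf_pow_eq_bot_of_isLocalRing _ (mt Ideal.span_singleton_eq_top.1 ha)] at hmem
  exact hb hmem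

-- By Krull's intersection theorem in `R/I`, `a ≡ yⁿ c` modulo `I` for some unit `c`.
lemma exists_pow_mem_sup_span_singleton {I : Ideal R} {y a : R}
    (hI : maximalIdeal R = I ⊔ Ideal.span {y}) (ha : a ∉ I) :
    ∃ n, y ^ n ∈ I ⊔ Ideal.span {a} := by
  have : Nontrivial (R ⧸ I) := Ideal.Quotient.nontrivial_iff.2 fun h => ha (h ▸ Submodule.mem_top)
  have : IsLocalRing (R ⧸ I) := .of_surjective' _ Ideal.Quotient.mk_surjective
  have : IsLocalHom (Ideal.Quotient.mk I) := .of_surjective _ Ideal.Quotient.mk_surjective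
  have hy : ¬ IsUnit (Ideal.Quotient.mk I y) := by
    rw [isUnit_map_iff, ← mem_nonunits_iff, ← mem_maximalIdeal, hI]
    exact Ideal.mem_sup_right (Ideal.mem_span_singleton_self y)
  obtain ⟨c, hac, hc⟩ := (finiteMultiplicity_of_not_isUnit hy
    (mt Ideal.Quotient.eq_zero_iff_mem.1 ha)).exists_eq_pow_mul_and_not_dvd
  obtain ⟨c, rfl⟩ := Ideal.Quotient.mk_surjective c
  have hcunit : IsUnit c := by
    refine notMem_maximalIdeal.1 (mt (fun h => ?_) hc)
    rw [hI, sup_comm] at h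
    obtain ⟨d, b, hb, rfl⟩ := Ideal.mem_span_singleton_sup.1 h
    simp [Ideal.Quotient.eq_zero_iff_mem.2 hb]
  generalize multiplicity (Ideal.Quotient.mk I y) (Ideal.Quotient.mk I a) = n at hac
  refine ⟨n, ?_⟩
  rw [← map_pow, ← map_mul, Ideal.Quotient.eq] at hac
  rw [← Ideal.mul_unit_mem_iff_mem _ hcunit, ← sub_sub_cancel a (y ^ n * c)]
  exact sub_mem (Ideal.mem_sup_right (Ideal.mem_span_singleton_self a)) (Ideal.mem_sup_left hac)

variable {x y : R}

lemma pow_notMem_sup_span_singleton_of_two_le_ringKrullDim_quotient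
    (hxy : maximalIdeal R = Ideal.span {x, y}) {I : Ideal R} (hI : 2 ≤ ringKrullDim (R ⧸ I))
    (n : ℕ) : y ^ n ∉ I ⊔ Ideal.span {x} := by
  intro hyn
  refine not_maximalIdeal_le_radical_sup_span_singleton hI
    (hxy ▸ Ideal.subset_span (Set.mem_insert x {y})) ?_
  rw [hxy, Ideal.span_le]
  exact Set.pair_subset
    (Ideal.le_radical (Ideal.mem_sup_right (Ideal.mem_span_singleton_self x))) ⟨n, hyn⟩

lemma notMem_of_two_le_ringKrullDim_quotient (hxy : maximalIdeal R = Ideal.span {x, y})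
    {I : Ideal R} (hI : 2 ≤ ringKrullDim (R ⧸ I)) : x ∉ I := fun hxI =>
  pow_notMem_sup_span_singleton_of_two_le_ringKrullDim_quotient (x := y) (y := x)
    (hxy.trans (by rw [Set.pair_comm])) hI 1 (Ideal.mem_sup_left (by rwa [pow_one]))

lemma eq_bot_of_two_le_ringKrullDim_quotient (hxy : maximalIdeal R = Ideal.span {x, y})
    {p : Ideal R} [hp : p.IsPrime] (hdim : 2 ≤ ringKrullDim (R ⧸ p)) : p = ⊥ := by
  have hpx : p ≤ Ideal.span {x} := by
    intro a hap
    by_contra hax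
    obtain ⟨n, hn⟩ := exists_pow_mem_sup_span_singleton (hxy.trans (Ideal.span_insert x {y})) hax
    refine pow_notMem_sup_span_singleton_of_two_le_ringKrullDim_quotient hxy hdim n ?_
    rw [sup_comm]
    exact sup_le_sup_left ((Ideal.span_singleton_le_iff_mem p).2 hap) _ hn
  have hxp : x ∉ p := notMem_of_two_le_ringKrullDim_quotient hxy hdim
  have hpmul : p ≤ maximalIdeal R • p := by
    intro a hap
    obtain ⟨b, rfl⟩ := Ideal.mem_span_singleton.1 (hpx hap)
    exact Submodule.smul_mem_smul (hxy ▸ Ideal.subset_span (Set.mem_insert x {y}))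
      ((hp.mem_or_mem hap).resolve_left hxp)
  exact Submodule.eq_bot_of_le_smul_of_le_jacobson_bot _ p (IsNoetherian.noetherian p) hpmul
    (maximalIdeal_le_jacobson _)

lemma isWeaklyRegular_pair_of_maximalIdeal_eq_span (hxy : maximalIdeal R = Ideal.span {x, y})
    (hdim : 2 ≤ ringKrullDim R) : IsWeaklyRegular R [x, y] := by
  obtain ⟨p, hp, hpdim⟩ := exists_isPrime_le_ringKrullDim_quotient (n := 2) hdim
  obtain rfl := eq_bot_of_two_le_ringKrullDim_quotient hxy hpdim
  have : IsDomain R := .of_bot_isPrime R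
  have hx : x ≠ 0 := notMem_of_two_le_ringKrullDim_quotient hxy hpdim
  refine isWeaklyRegular_pair_iff.2 ⟨.of_ne_zero hx,
    (isSMulRegular_quotient_iff_mem_of_smul_mem _ y).2 fun a hya => ?_⟩
  by_contra ha
  obtain ⟨n, hn⟩ := exists_pow_mem_sup_span_singleton (hxy.trans (Ideal.span_insert x {y})) ha
  obtain ⟨c, b, hb, hyn⟩ := Ideal.mem_span_singleton_sup.1 (sup_comm _ (Ideal.span {a}) ▸ hn)
  have hyx : y ^ (n + 1) ∈ Ideal.span {x} := by
    rw [pow_succ', ← hyn, mul_add, mul_left_comm]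
    exact add_mem (Ideal.mul_mem_left _ c hya) (Ideal.mul_mem_left _ y hb)
  exact pow_notMem_sup_span_singleton_of_two_le_ringKrullDim_quotient hxy hpdim (n + 1)
    (Ideal.mem_sup_right hyx)

theorem length_quotient_maximalIdeal_pow (hxy : maximalIdeal R = Ideal.span {x, y})
    (hdim : 2 ≤ ringKrullDim R) (n : ℕ) :
    Module.length R (R ⧸ maximalIdeal R ^ n) = (n + 1).choose 2 := by
  rw [hxy, length_quotient_span_pair_pow (isWeaklyRegular_pair_of_maximalIdeal_eq_span hxy hdim),
    ← hxy, length_quotient_maximalIdeal, mul_one]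

theorem choose_le_card_add_length_quotient_span (hxy : maximalIdeal R = Ideal.span {x, y})
    (hdim : 2 ≤ ringKrullDim R) {e : ℕ} {s : Finset R} (hs : Ideal.span s ≤ maximalIdeal R ^ e) :
    (e + 2).choose 2 ≤ s.card + Module.length R (R ⧸ Ideal.span (s : Set R)) :=
  (length_quotient_maximalIdeal_pow hxy hdim (e + 1)).symm.trans_le
    (length_quotient_maximalIdeal_pow_succ_le hs)

end NoetherianLocalRing

lemma add_two_choose_two {e : ℕ} (he : 1 ≤ e) :
    (e + 2).choose 2 = 2 + ((e + 1).choose 2 + e - 1) := by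
  rw [Nat.choose_succ_succ' (e + 1) 1, Nat.choose_one_right, one_add_one_eq_two]
  omega

lemma add_one_choose_two_add_sub_one {e : ℕ} (he : 1 ≤ e) :
    (e + 1).choose 2 + e - 1 = (e ^ 2 + 3 * e - 2) / 2 := by
  have htriangle : (e + 1).choose 2 * 2 = e ^ 2 + e := by
    rw [Nat.choose_two_right, Nat.add_sub_cancel, Nat.div_mul_cancel]
    · ring
    · rw [mul_comm]
      exact (Nat.even_mul_succ_self e).two_dvd
  omega

theorem stmt_7_general {R : Type*} [CommRing R] [IsNoetherianRing R] [IsLocalRing R]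
    (hreg : ∃ x y : R, maximalIdeal R = Ideal.span {x, y}) (hdim : ringKrullDim R = 2)
    (e : ℕ) (he : 1 ≤ e) (f g : R) (hf : f ∈ maximalIdeal R ^ e) (hg : g ∈ maximalIdeal R ^ e) :
    ((((e + 1).choose 2 + e - 1 : ℕ) : WithBot ℕ∞)
        ≤ Order.krullDim (Submodule R (R ⧸ Ideal.span {f, g})))
    ∧ (e + 1).choose 2 + e - 1 = (e ^ 2 + 3 * e - 2) / 2 := by
  classical
  refine ⟨?_, add_one_choose_two_add_sub_one he⟩
  obtain ⟨x, y, hxy⟩ := hreg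
  have hspan : Ideal.span (({f, g} : Finset R) : Set R) ≤ maximalIdeal R ^ e := by
    rw [Finset.coe_pair, Ideal.span_le]
    exact Set.pair_subset hf hg
  have hcard : ((({f, g} : Finset R).card : ℕ) : ℕ∞) ≤ 2 := mod_cast Finset.card_le_two
  have hlength := choose_le_card_add_length_quotient_span hxy hdim.ge hspan
  grw [hcard, Finset.coe_pair, add_two_choose_two he, Nat.cast_add, Nat.cast_ofNat,
    ENat.add_le_add_iff_left (by decide)] at hlength
  rw [← Module.coe_length]
  exact WithBot.coe_le_coe.2 hlength

/-- Let R be a 2-dimensional regular local ring over an algebraically closed field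
(Noetherian local, maximal ideal generated by two elements, Krull dimension 2),
e ≥ 1, and I = (f,g) an 𝔪-primary ideal with f, g ∈ 𝔪^e.  Then the length of R/I
(the Krull dimension of its lattice of submodules) is at least
binom(e+1,2) + e − 1 = (e² + 3e − 2)/2. -/
theorem stmt_7 (k R : Type) [Field k] [IsAlgClosed k]
    [CommRing R] [IsNoetherianRing R] [IsLocalRing R] [Algebra k R]
    (hreg : ∃ x y : R, IsLocalRing.maximalIdeal R = Ideal.span {x, y})
    (hdim : ringKrullDim R = 2)
    (e : ℕ) (he : 1 ≤ e) (f g : R)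
    (hf : f ∈ IsLocalRing.maximalIdeal R ^ e)
    (hg : g ∈ IsLocalRing.maximalIdeal R ^ e)
    (hne : Ideal.span {f, g} ≠ ⊤)
    (hprimary : IsLocalRing.maximalIdeal R ≤ (Ideal.span {f, g}).radical) :
    ((((e + 1).choose 2 + e - 1 : ℕ) : WithBot ℕ∞)
        ≤ Order.krullDim (Submodule R (R ⧸ Ideal.span {f, g})))
    ∧ (e + 1).choose 2 + e - 1 = (e ^ 2 + 3 * e - 2) / 2 :=
  stmt_7_general hreg hdim e he f g hf hg
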